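/- Every finite subset of the set of Church integers has a strong storage operator: for every finite set F ⊆ {n̲ : n ∈ ℕ} there is a closed λ-term T such that for every n̲ ∈ F and every λ-term θₙ ≃β n̲, (T)θₙ f ≻ (f)n̲ (f a fresh variable). -/

import Mathlib

/- Pure untyped λ-calculus with de Bruijn indices. -/

inductive Lam : Type
  | var : ℕ → Lam
  | app : Lam → Lam → Lam
  | abs : Lam → Lam
  deriving DecidableEq

namespace Lam

/-- Renaming of free variables. -/
def rename (ρ : ℕ → ℕ) : Lam → Lam
  | var i => var (ρ i)
  | app u v => app (u.rename ρ) (v.rename ρ)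
  | abs u => abs (u.rename (fun i => match i with | 0 => 0 | j+1 => ρ j + 1))

/-- Lifting of a simultaneous substitution under a binder. -/
def liftSub (σ : ℕ → Lam) : ℕ → Lam
  | 0 => var 0
  | i+1 => (σ i).rename (· + 1)

/-- Simultaneous (capture-avoiding) substitution of the free variables. -/
def subst (σ : ℕ → Lam) : Lam → Lam
  | var i => σ i
  | app u v => app (u.subst σ) (v.subst σ)
  | abs u => abs (u.subst (liftSub σ))

/-- `u.subst0 v` is `u[v/x]` for the first variable. -/
def subst0 (u v : Lam) : Lam :=
  u.subst (fun i => match i with | 0 => v | j+1 => var j)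

/-- One step of β-reduction (anywhere in the term). -/
inductive Beta : Lam → Lam → Prop
  | beta (u v : Lam) : Beta (app (abs u) v) (u.subst0 v)
  | appL {u u'} (v) : Beta u u' → Beta (app u v) (app u' v)
  | appR (u) {v v'} : Beta v v' → Beta (app u v) (app u v')
  | abs {u u'} : Beta u u' → Beta (abs u) (abs u')

/-- β-equivalence `≃β`. -/
def BetaEq : Lam → Lam → Prop := Relation.EqvGen Beta

/-- A term is normal if it has no β-redex. -/
def Normal (t : Lam) : Prop := ∀ u, ¬ Beta t u

def IsAbs : Lam → Prop
  | abs _ => True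
  | _ => False

/-- One step of head reduction: reduction of the head redex. -/
inductive HeadStep : Lam → Lam → Prop
  | beta (u v) : HeadStep (app (abs u) v) (u.subst0 v)
  | appL {u u'} (v) : ¬ u.IsAbs → HeadStep u u' → HeadStep (app u v) (app u' v)
  | abs {u u'} : HeadStep u u' → HeadStep (abs u) (abs u')

/-- `HeadRedN n u v` : `u` head-reduces to `v` in exactly `n` steps (`u ≻ v` with `n(u,v) = n`). -/
inductive HeadRedN : ℕ → Lam → Lam → Prop
  | refl (u) : HeadRedN 0 u u
  | step {n u v w} : HeadStep u v → HeadRedN n v w → HeadRedN (n+1) u w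

/-- `u ≻ v` : `v` is obtained from `u` by some head reductions. -/
def HeadRed (u v : Lam) : Prop := ∃ n, HeadRedN n u v

/-- Head normal form. -/
def HeadNF (t : Lam) : Prop := ∀ u, ¬ HeadStep t u

def ClosedUnder : ℕ → Lam → Prop
  | k, var i => i < k
  | k, app u v => ClosedUnder k u ∧ ClosedUnder k v
  | k, abs u => ClosedUnder (k+1) u

/-- Closed λ-term. -/
def Closed (t : Lam) : Prop := ClosedUnder 0 t

/-- `(f)ⁿx` : `iterApp f n x = (f)(f)…(f)x`. -/
def iterApp (f : Lam) : ℕ → Lam → Lam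
  | 0, x => x
  | n+1, x => app f (iterApp f n x)

/-- The Church integer `n̲ = λxλf(f)ⁿx`. -/
def church (n : ℕ) : Lam := abs (abs (iterApp (var 0) n (var 1)))

/-- `(t)w₁…wₖ`. -/
def appList (t : Lam) (ws : List Lam) : Lam := ws.foldl app t

/-- `T` is a storage operator for the closed normal term `t` :
there is `τ ≃β t` such that for every `θ ≃β t` there is a substitution `σ`
(not touching the fresh variable `f`, represented by the de Bruijn index `0`)
with `(T)θf ≻ (f)σ(τ)`. -/
def IsStorageFor (T t : Lam) : Prop :=
  Closed T ∧ ∃ τ, BetaEq τ t ∧ ∀ θ, BetaEq θ t →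
    ∃ σ : ℕ → Lam, σ 0 = var 0 ∧
      HeadRed (app (app T θ) (var 0)) (app (var 0) (τ.subst σ))

end Lam

/-!
If `t` is closed and `(t)w₁…wₖ ≃β xᵢ`, then every `θ ≃β t` satisfies `(θ)w₁…wₖ ≻ xᵢ`: a term
β-equivalent to a variable reaches it by weak head reduction, and after renaming `θ` apart from the
`wⱼ` one can still substitute anything for the variables of the `wⱼ`. Substituting `λf (f)tᵢ` for
`xᵢ` gives `(θ)w₁'…wₖ' f ≻ (f)tᵢ`, so terms told apart by a common list of arguments have the
strong storage operator `λν (ν)w₁'…wₖ'`. The integers below `m` are told apart by applying them to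
the list `[x₀, …, xₘ₋₁]`, the tail function and the selector of the first entry: `n̲` drops `n`
entries and selects `xₙ`.
-/

namespace Lam

open Relation

/-! ### Substitution calculus -/

theorem rename_eq_subst (t : Lam) (ρ : ℕ → ℕ) : t.rename ρ = t.subst (fun i => var (ρ i)) := by
  induction t generalizing ρ with
  | var i => rfl
  | app u v ihu ihv => simp only [rename, subst, ihu, ihv]
  | abs u ih =>
    simp only [rename, subst, ih]
    congr 2
    funext i
    cases i <;> rfl

theorem subst_var (t : Lam) : t.subst var = t := by
  induction t with
  | var i => rfl
  | app u v ihu ihv => simp only [subst, ihu, ihv]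
  | abs u ih =>
    have liftSub_var : liftSub var = var := by
      funext i
      cases i <;> rfl
    simp only [subst, liftSub_var, ih]

theorem subst_rename (t : Lam) (ρ : ℕ → ℕ) (σ : ℕ → Lam) :
    (t.rename ρ).subst σ = t.subst (fun i => σ (ρ i)) := by
  induction t generalizing ρ σ with
  | var i => rfl
  | app u v ihu ihv => simp only [rename, subst, ihu, ihv]
  | abs u ih =>
    simp only [rename, subst, ih]
    congr 2
    funext i
    cases i <;> rfl

theorem rename_rename (t : Lam) (ρ ρ' : ℕ → ℕ) :
    (t.rename ρ).rename ρ' = t.rename (fun i => ρ' (ρ i)) := by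
  rw [rename_eq_subst _ ρ', subst_rename, ← rename_eq_subst t]

theorem rename_subst (t : Lam) (σ : ℕ → Lam) (ρ : ℕ → ℕ) :
    (t.subst σ).rename ρ = t.subst (fun i => (σ i).rename ρ) := by
  induction t generalizing σ ρ with
  | var i => rfl
  | app u v ihu ihv => simp only [rename, subst, ihu, ihv]
  | abs u ih =>
    simp only [rename, subst, ih]
    congr 2
    funext i
    cases i with
    | zero => rfl
    | succ j => simp only [liftSub, rename_rename]

theorem subst_subst (t : Lam) (σ τ : ℕ → Lam) :
    (t.subst σ).subst τ = t.subst (fun i => (σ i).subst τ) := by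
  induction t generalizing σ τ with
  | var i => rfl
  | app u v ihu ihv => simp only [subst, ihu, ihv]
  | abs u ih =>
    simp only [subst, ih]
    congr 2
    funext i
    cases i with
    | zero => rfl
    | succ j => simp only [liftSub, subst_rename, rename_subst]

theorem rename_succ_subst0 (t v : Lam) : (t.rename (· + 1)).subst0 v = t := by
  rw [subst0, subst_rename]
  exact subst_var t

theorem subst0_subst (u v : Lam) (σ : ℕ → Lam) :
    (u.subst0 v).subst σ = (u.subst (liftSub σ)).subst0 (v.subst σ) := by
  rw [subst0, subst0, subst_subst, subst_subst]
  congr 1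
  funext i
  cases i with
  | zero => rfl
  | succ j => exact (rename_succ_subst0 (σ j) (v.subst σ)).symm

theorem subst_appList (t : Lam) (ws : List Lam) (σ : ℕ → Lam) :
    (appList t ws).subst σ = appList (t.subst σ) (ws.map (subst σ)) := by
  induction ws generalizing t with
  | nil => rfl
  | cons w _ ih => exact ih (app t w)

theorem subst_iterApp (f x : Lam) (n : ℕ) (σ : ℕ → Lam) :
    (iterApp f n x).subst σ = iterApp (f.subst σ) n (x.subst σ) := by
  induction n with
  | zero => rfl
  | succ n ih => simp only [iterApp, subst, ih]

/-! ### Closed terms -/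

theorem ClosedUnder.subst_eq {t : Lam} {k : ℕ} {σ : ℕ → Lam} (ht : ClosedUnder k t)
    (hσ : ∀ i < k, σ i = var i) : t.subst σ = t := by
  induction t generalizing k σ with
  | var i => exact hσ i ht
  | app u v ihu ihv => simp only [subst, ihu ht.1 hσ, ihv ht.2 hσ]
  | abs u ih =>
    have hlift : ∀ i < k + 1, liftSub σ i = var i
      | 0, _ => rfl
      | j + 1, hj => by simp only [liftSub, hσ j (Nat.lt_of_succ_lt_succ hj), rename]
    simp only [subst, ih (k := k + 1) ht hlift]

theorem Closed.subst_eq {t : Lam} (ht : Closed t) (σ : ℕ → Lam) : t.subst σ = t :=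
  ClosedUnder.subst_eq ht fun _ hi => absurd hi (Nat.not_lt_zero _)

theorem ClosedUnder.rename {t : Lam} {k l : ℕ} {ρ : ℕ → ℕ} (ht : ClosedUnder k t)
    (hρ : ∀ i < k, ρ i < l) : ClosedUnder l (t.rename ρ) := by
  induction t generalizing k l ρ with
  | var i => exact hρ i ht
  | app u v ihu ihv => exact ⟨ihu ht.1 hρ, ihv ht.2 hρ⟩
  | abs _ ih =>
    refine ih (k := k + 1) (l := l + 1) ht ?_
    rintro (_ | j) hj
    · exact Nat.succ_pos l
    · exact Nat.succ_lt_succ (hρ j (Nat.lt_of_succ_lt_succ hj))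

theorem Closed.closedUnder_rename {t : Lam} (ht : Closed t) (k : ℕ) (ρ : ℕ → ℕ) :
    ClosedUnder k (t.rename ρ) :=
  ClosedUnder.rename ht fun _ hi => absurd hi (Nat.not_lt_zero _)

theorem closedUnder_subst {k : ℕ} {σ : ℕ → Lam} (hσ : ∀ i, ClosedUnder k (σ i)) (t : Lam) :
    ClosedUnder k (t.subst σ) := by
  induction t generalizing k σ with
  | var i => exact hσ i
  | app u v ihu ihv => exact ⟨ihu hσ, ihv hσ⟩
  | abs _ ih =>
    refine ih (k := k + 1) ?_
    rintro (_ | j)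
    · exact Nat.succ_pos k
    · exact (hσ j).rename fun _ hi => Nat.succ_lt_succ hi

theorem closedUnder_appList {k : ℕ} {t : Lam} {ws : List Lam} (ht : ClosedUnder k t)
    (hws : ∀ w ∈ ws, ClosedUnder k w) : ClosedUnder k (appList t ws) := by
  induction ws generalizing t with
  | nil => exact ht
  | cons w ws ih =>
    rw [List.forall_mem_cons] at hws
    exact ih ⟨ht, hws.1⟩ hws.2

theorem closedUnder_iterApp {k : ℕ} {f x : Lam} (hf : ClosedUnder k f) (hx : ClosedUnder k x)
    (n : ℕ) : ClosedUnder k (iterApp f n x) := by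
  induction n with
  | zero => exact hx
  | succ n ih => exact ⟨hf, ih⟩

theorem closed_church (n : ℕ) : Closed (church n) :=
  closedUnder_iterApp (k := 2) (f := var 0) (x := var 1) Nat.two_pos Nat.one_lt_two n

/-! ### β-reduction and β-equivalence -/

/-- Many-step β-reduction. -/
abbrev BetaRed : Lam → Lam → Prop := ReflTransGen Beta

theorem Beta.subst {u v : Lam} (h : Beta u v) (σ : ℕ → Lam) : Beta (u.subst σ) (v.subst σ) := by
  induction h generalizing σ with
  | beta u v =>
    rw [subst0_subst]
    exact .beta _ _
  | appL v _ ih => exact .appL _ (ih σ)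
  | appR u _ ih => exact .appR _ (ih σ)
  | abs _ ih => exact .abs (ih _)

theorem BetaRed.app_congr {u u' v v' : Lam} (hu : BetaRed u u') (hv : BetaRed v v') :
    BetaRed (app u v) (app u' v') :=
  (hu.lift (app · v) fun _ _ => .appL v).trans (hv.lift (app u') fun _ _ => .appR u')

theorem BetaRed.abs_congr {u u' : Lam} (h : BetaRed u u') : BetaRed (abs u) (abs u') :=
  h.lift abs fun _ _ => .abs

theorem BetaRed.rename {u v : Lam} (h : BetaRed u v) (ρ : ℕ → ℕ) :
    BetaRed (u.rename ρ) (v.rename ρ) := by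
  rw [rename_eq_subst, rename_eq_subst]
  exact h.lift (Lam.subst _) fun _ _ h => h.subst _

theorem BetaRed.subst_right {σ τ : ℕ → Lam} (h : ∀ i, BetaRed (σ i) (τ i)) (t : Lam) :
    BetaRed (t.subst σ) (t.subst τ) := by
  induction t generalizing σ τ with
  | var i => exact h i
  | app u v ihu ihv => exact .app_congr (ihu h) (ihv h)
  | abs u ih =>
    refine .abs_congr (ih ?_)
    rintro (_ | j)
    · exact .refl
    · exact .rename (h j) _

theorem BetaRed.subst0_right (u : Lam) {v v' : Lam} (h : BetaRed v v') :
    BetaRed (u.subst0 v) (u.subst0 v') := by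
  refine .subst_right ?_ u
  rintro (_ | j)
  · exact h
  · exact .refl

theorem BetaRed.eq_of_var {i : ℕ} {t : Lam} (h : BetaRed (var i) t) : t = var i := by
  rcases h.cases_head with rfl | ⟨_, ⟨⟩, _⟩
  rfl

instance : Trans BetaEq BetaEq BetaEq where
  trans h h' := .trans _ _ _ h h'

theorem BetaEq.of_subst0_eq {u v w : Lam} (h : u.subst0 v = w) : BetaEq (app (abs u) v) w :=
  .rel _ _ (h ▸ .beta u v)

theorem BetaEq.map {C : Lam → Lam} (hC : ∀ u v, Beta u v → Beta (C u) (C v)) {u v : Lam}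
    (h : BetaEq u v) : BetaEq (C u) (C v) := by
  induction h with
  | rel u v h => exact .rel _ _ (hC u v h)
  | refl u => exact .refl _
  | symm u v _ ih => exact .symm _ _ ih
  | trans u v w _ _ ih ih' => exact .trans _ _ _ ih ih'

theorem BetaEq.subst {u v : Lam} (h : BetaEq u v) (σ : ℕ → Lam) :
    BetaEq (u.subst σ) (v.subst σ) :=
  h.map fun _ _ h => h.subst σ

theorem BetaEq.app_left {u u' : Lam} (h : BetaEq u u') (v : Lam) : BetaEq (app u v) (app u' v) :=
  h.map (C := (app · v)) fun _ _ => .appL v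

theorem BetaEq.app_right (u : Lam) {v v' : Lam} (h : BetaEq v v') : BetaEq (app u v) (app u v') :=
  h.map fun _ _ => .appR u

theorem BetaEq.appList {t t' : Lam} (h : BetaEq t t') (ws : List Lam) :
    BetaEq (appList t ws) (appList t' ws) := by
  induction ws generalizing t t' with
  | nil => exact h
  | cons w _ ih => exact ih (h.app_left w)

/-! ### Weak head reduction -/

/-- One step of weak head reduction: head reduction that never goes under a `λ`. Unlike `HeadStep`
it is stable under application to an argument. -/
inductive WeakHeadStep : Lam → Lam → Prop
  | beta (u v) : WeakHeadStep (app (abs u) v) (u.subst0 v)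
  | appL {u u'} (v) : WeakHeadStep u u' → WeakHeadStep (app u v) (app u' v)

/-- Many-step weak head reduction. -/
abbrev WeakHeadRed : Lam → Lam → Prop := ReflTransGen WeakHeadStep

theorem WeakHeadStep.of_subst0_eq {u v w : Lam} (h : u.subst0 v = w) :
    WeakHeadStep (app (abs u) v) w :=
  h ▸ .beta u v

theorem WeakHeadStep.subst {u v : Lam} (h : WeakHeadStep u v) (σ : ℕ → Lam) :
    WeakHeadStep (u.subst σ) (v.subst σ) := by
  induction h with
  | beta u v =>
    rw [subst0_subst]
    exact .beta _ _
  | appL v _ ih => exact .appL _ ih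

theorem WeakHeadStep.toBeta {u v : Lam} (h : WeakHeadStep u v) : Beta u v := by
  induction h with
  | beta u v => exact .beta u v
  | appL v _ ih => exact .appL v ih

theorem WeakHeadStep.not_isAbs {u v : Lam} (h : WeakHeadStep u v) : ¬ u.IsAbs := by
  cases h <;> exact id

theorem WeakHeadStep.headStep {u v : Lam} (h : WeakHeadStep u v) : HeadStep u v := by
  induction h with
  | beta u v => exact .beta u v
  | appL v h ih => exact .appL v h.not_isAbs ih

theorem WeakHeadRed.headRed {u v : Lam} (h : WeakHeadRed u v) : HeadRed u v := by
  induction h using ReflTransGen.head_induction_on with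
  | refl => exact ⟨0, .refl _⟩
  | head h _ ih =>
    obtain ⟨n, hn⟩ := ih
    exact ⟨n + 1, .step h.headStep hn⟩

theorem WeakHeadRed.betaRed {u v : Lam} (h : WeakHeadRed u v) : BetaRed u v :=
  ReflTransGen.mono (fun _ _ => WeakHeadStep.toBeta) _ _ h

theorem WeakHeadRed.app_left {u u' : Lam} (h : WeakHeadRed u u') (v : Lam) :
    WeakHeadRed (app u v) (app u' v) :=
  h.lift (app · v) fun _ _ => .appL v

theorem WeakHeadRed.subst {u v : Lam} (h : WeakHeadRed u v) (σ : ℕ → Lam) :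
    WeakHeadRed (u.subst σ) (v.subst σ) :=
  h.lift (Lam.subst σ) fun _ _ h => h.subst σ

theorem WeakHeadRed.rename {u v : Lam} (h : WeakHeadRed u v) (ρ : ℕ → ℕ) :
    WeakHeadRed (u.rename ρ) (v.rename ρ) := by
  rw [rename_eq_subst, rename_eq_subst]
  exact h.subst _

/-! ### Weak head reduction commutes with β-reduction -/

theorem WeakHeadStep.commute_beta {t s t' : Lam} (h : WeakHeadStep t s) (hb : Beta t t') :
    ∃ w, BetaRed s w ∧ ReflGen WeakHeadStep t' w := by
  induction h generalizing t' with
  | beta u v =>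
    cases hb with
    | beta => exact ⟨_, .refl, .refl⟩
    | appL _ hu =>
      cases hu with
      | abs hu => exact ⟨_, .single (hu.subst _), .single (.beta _ _)⟩
    | appR _ hv => exact ⟨_, .subst0_right u (.single hv), .single (.beta _ _)⟩
  | appL v h ih =>
    cases hb with
    | beta => cases h
    | appL _ hb =>
      obtain ⟨w, hw, hstep⟩ := ih hb
      refine ⟨app w v, .app_congr hw .refl, ?_⟩
      cases hstep with
      | refl => exact .refl
      | single hstep => exact .single (.appL v hstep)
    | appR _ hb => exact ⟨_, .app_congr .refl (.single hb), .single (.appL _ h)⟩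

theorem WeakHeadStep.commute_betaRed {t s t' : Lam} (h : WeakHeadStep t s) (hb : BetaRed t t') :
    ∃ w, BetaRed s w ∧ ReflGen WeakHeadStep t' w := by
  induction hb using ReflTransGen.head_induction_on generalizing s with
  | refl => exact ⟨s, .refl, .single h⟩
  | head hb hbs ih =>
    obtain ⟨w, hw, hstep⟩ := h.commute_beta hb
    cases hstep with
    | refl => exact ⟨t', hw.trans hbs, .refl⟩
    | single hstep =>
      obtain ⟨w', hw', hstep'⟩ := ih hstep
      exact ⟨w', hw.trans hw', hstep'⟩

theorem WeakHeadRed.commute_betaRed {t s t' : Lam} (h : WeakHeadRed t s) (hb : BetaRed t t') :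
    ∃ w, BetaRed s w ∧ WeakHeadRed t' w := by
  induction h using ReflTransGen.head_induction_on generalizing t' with
  | refl => exact ⟨t', hb, .refl⟩
  | head h _ ih =>
    obtain ⟨w, hw, hstep⟩ := h.commute_betaRed hb
    obtain ⟨w', hw', hred⟩ := ih hw
    exact ⟨w', hw', hstep.to_reflTransGen.trans hred⟩

/-! ### Standardization -/

/-- Standard reduction: reduce the head weakly, then the immediate subterms of the result, each in
the same fashion. -/
inductive StandardRed : Lam → Lam → Prop
  | var {t i} : WeakHeadRed t (var i) → StandardRed t (var i)
  | app {t u v u' v'} : WeakHeadRed t (app u v) → StandardRed u u' → StandardRed v v' →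
      StandardRed t (app u' v')
  | abs {t u u'} : WeakHeadRed t (abs u) → StandardRed u u' → StandardRed t (abs u')

theorem StandardRed.refl (t : Lam) : StandardRed t t := by
  induction t with
  | var i => exact .var .refl
  | app u v ihu ihv => exact .app .refl ihu ihv
  | abs u ih => exact .abs .refl ih

theorem WeakHeadRed.trans_standardRed {s t u : Lam} (h : WeakHeadRed s t) (h' : StandardRed t u) :
    StandardRed s u := by
  cases h' with
  | var ht => exact .var (h.trans ht)
  | app ht hu hv => exact .app (h.trans ht) hu hv
  | abs ht hu => exact .abs (h.trans ht) hu

theorem StandardRed.rename {t t' : Lam} (h : StandardRed t t') (ρ : ℕ → ℕ) :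
    StandardRed (t.rename ρ) (t'.rename ρ) := by
  induction h generalizing ρ with
  | var ht => exact .var (ht.rename ρ)
  | app ht _ _ ihu ihv => exact .app (ht.rename ρ) (ihu ρ) (ihv ρ)
  | abs ht _ ih => exact .abs (ht.rename ρ) (ih _)

theorem StandardRed.subst {t t' : Lam} (h : StandardRed t t') {σ σ' : ℕ → Lam}
    (hσ : ∀ i, StandardRed (σ i) (σ' i)) : StandardRed (t.subst σ) (t'.subst σ') := by
  induction h generalizing σ σ' with
  | var ht => exact (ht.subst σ).trans_standardRed (hσ _)
  | app ht _ _ ihu ihv => exact .app (ht.subst σ) (ihu hσ) (ihv hσ)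
  | abs ht _ ih =>
    refine .abs (ht.subst σ) (ih ?_)
    rintro (_ | j)
    · exact .refl _
    · exact (hσ j).rename _

theorem StandardRed.subst0 {u u' v v' : Lam} (hu : StandardRed u u') (hv : StandardRed v v') :
    StandardRed (u.subst0 v) (u'.subst0 v') := by
  refine hu.subst ?_
  rintro (_ | j)
  · exact hv
  · exact .refl _

theorem StandardRed.trans_beta {s t t' : Lam} (h : StandardRed s t) (hb : Beta t t') :
    StandardRed s t' := by
  induction hb generalizing s with
  | beta u v =>
    obtain _ | ⟨hs, _ | _ | ⟨hfun, hu⟩, hv⟩ := h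
    have head_contraction : WeakHeadRed s _ := hs.trans ((hfun.app_left _).tail (.beta _ _))
    exact WeakHeadRed.trans_standardRed head_contraction (hu.subst0 hv)
  | appL v _ ih => cases h with | app hs hu hv => exact .app hs (ih hu) hv
  | appR u _ ih => cases h with | app hs hu hv => exact .app hs hu (ih hv)
  | abs _ ih => cases h with | abs hs hu => exact .abs hs (ih hu)

theorem BetaRed.standardRed {t t' : Lam} (h : BetaRed t t') : StandardRed t t' := by
  induction h with
  | refl => exact .refl t
  | tail _ hb ih => exact ih.trans_beta hb

theorem BetaRed.weakHeadRed_var {t : Lam} {i : ℕ} (h : BetaRed t (var i)) :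
    WeakHeadRed t (var i) := by
  cases h.standardRed with
  | var ht => exact ht

theorem Beta.weakHeadRed_var_iff {t u : Lam} (h : Beta t u) (i : ℕ) :
    WeakHeadRed t (var i) ↔ WeakHeadRed u (var i) := by
  refine ⟨fun ht => ?_, fun hu => BetaRed.weakHeadRed_var (.head h hu.betaRed)⟩
  obtain ⟨w, hw, huw⟩ := ht.commute_betaRed (.single h)
  rwa [hw.eq_of_var] at huw

theorem BetaEq.weakHeadRed_var {t : Lam} {i : ℕ} (h : BetaEq t (var i)) :
    WeakHeadRed t (var i) := by
  suffices weakHeadRed_var_iff : ∀ {t u}, BetaEq t u →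
      (WeakHeadRed t (var i) ↔ WeakHeadRed u (var i)) from
    (weakHeadRed_var_iff h).mpr .refl
  intro t u htu
  induction htu with
  | rel t u h => exact h.weakHeadRed_var_iff i
  | refl => rfl
  | symm _ _ _ ih => exact ih.symm
  | trans _ _ _ _ _ ih ih' => exact ih.trans ih'

/-! ### Storage operators from separating arguments -/

theorem BetaEq.weakHeadRed_appList_subst {t θ : Lam} {ws : List Lam} {i : ℕ} (ht : Closed t)
    (hws : BetaEq (Lam.appList t ws) (var i)) (hθ : BetaEq θ t) (σ : ℕ → Lam) :
    WeakHeadRed (Lam.appList θ (ws.map (Lam.subst σ))) (σ i) := by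
  -- The variables of `ws` move to even indices and those of `θ` to odd ones; `τ` moves them back.
  obtain ⟨τ, hτ_even, hτ_odd⟩ :
      ∃ τ : ℕ → Lam, (∀ j, τ (2 * j) = σ j) ∧ ∀ j, τ (2 * j + 1) = var j :=
    ⟨fun k => if Even k then σ (k / 2) else var (k / 2), fun j => by simp, fun j => by
      have : (2 * j + 1) / 2 = j := by omega
      simp [this]⟩
  let evens : ℕ → Lam := fun j => var (2 * j)
  let odds : ℕ → Lam := fun j => var (2 * j + 1)
  have hθ_odds : BetaEq (θ.subst odds) t := ht.subst_eq odds ▸ hθ.subst odds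
  have hws_evens : BetaEq (Lam.appList t (ws.map (Lam.subst evens))) (var (2 * i)) := by
    simpa only [subst_appList, ht.subst_eq, Lam.subst] using hws.subst evens
  have hred : WeakHeadRed (Lam.appList (θ.subst odds) (ws.map (Lam.subst evens))) (var (2 * i)) :=
    BetaEq.weakHeadRed_var (.trans _ _ _ (hθ_odds.appList _) hws_evens)
  simpa [subst_appList, subst_subst, Function.comp_def, evens, odds, Lam.subst, hτ_even, hτ_odd,
    subst_var] using hred.subst τ

/-- The term `λf (f)t`, which hands `t` over to its argument. -/
def feed (t : Lam) : Lam := abs (app (var 0) (t.rename (· + 1)))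

theorem closed_feed {t : Lam} (ht : Closed t) : Closed (feed t) :=
  ⟨Nat.one_pos, ht.closedUnder_rename 1 _⟩

theorem weakHeadStep_feed_app (t f : Lam) : WeakHeadStep (app (feed t) f) (app f t) :=
  .of_subst0_eq (congrArg (app f) (rename_succ_subst0 t f))

/-- The term `λν (ν)w₁'…wₖ'`, where `wⱼ'` is `wⱼ` with `λf (f)(t i)` substituted for the variable
`i`. It is a strong storage operator for each closed `t i` that the arguments `ws` send to the
variable `i`. -/
def storageOperator (t : ℕ → Lam) (ws : List Lam) : Lam :=
  abs (appList (var 0) (ws.map fun w => (w.subst fun i => feed (t i)).rename (· + 1)))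

theorem closed_storageOperator {t : ℕ → Lam} (ht : ∀ i, Closed (t i)) (ws : List Lam) :
    Closed (storageOperator t ws) := by
  refine closedUnder_appList (k := 1) Nat.one_pos (List.forall_mem_map.mpr fun w _ => ?_)
  exact Closed.closedUnder_rename (closedUnder_subst (fun i => closed_feed (ht i)) w) 1 _

theorem weakHeadStep_storageOperator_app (t : ℕ → Lam) (ws : List Lam) (θ : Lam) :
    WeakHeadStep (app (storageOperator t ws) θ)
      (appList θ (ws.map (subst fun i => feed (t i)))) := by
  refine .of_subst0_eq ?_
  rw [subst0, subst_appList, List.map_map]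
  congr 1
  exact List.map_congr_left fun w _ => rename_succ_subst0 _ θ

theorem weakHeadRed_storageOperator {t : ℕ → Lam} {ws : List Lam} {n : ℕ} (ht : Closed (t n))
    (hws : BetaEq (appList (t n) ws) (var n)) {θ : Lam} (hθ : BetaEq θ (t n)) (f : Lam) :
    WeakHeadRed (app (app (storageOperator t ws) θ) f) (app f (t n)) := by
  have hselect : WeakHeadRed (app (storageOperator t ws) θ) (feed (t n)) :=
    .head (weakHeadStep_storageOperator_app t ws θ)
      (BetaEq.weakHeadRed_appList_subst ht hws hθ fun i => feed (t i))
  exact (hselect.app_left f).tail (weakHeadStep_feed_app (t n) f)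

/-! ### Separating the Church integers -/

/-- The pair `λz (z)a b`. -/
def pair (a b : Lam) : Lam := abs (app (app (var 0) (a.rename (· + 1))) (b.rename (· + 1)))

/-- The selector `λaλb a`: a pair applied to it returns its first component. -/
def selectFst : Lam := abs (abs (var 1))

/-- The selector `λaλb b`: a pair applied to it returns its second component. -/
def selectSnd : Lam := abs (abs (var 0))

theorem betaEq_pair_app (a b z : Lam) : BetaEq (app (pair a b) z) (app (app z a) b) :=
  .of_subst0_eq (congrArg₂ (fun a' b' => app (app z a') b') (rename_succ_subst0 a z)
    (rename_succ_subst0 b z))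

theorem betaEq_pair_selectFst (a b : Lam) : BetaEq (app (pair a b) selectFst) a :=
  calc
    BetaEq _ (app (app selectFst a) b) := betaEq_pair_app a b _
    BetaEq _ (app (abs (a.rename (· + 1))) b) := .app_left (.of_subst0_eq rfl) b
    BetaEq _ a := .of_subst0_eq (rename_succ_subst0 a b)

theorem betaEq_pair_selectSnd (a b : Lam) : BetaEq (app (pair a b) selectSnd) b :=
  calc
    BetaEq _ (app (app selectSnd a) b) := betaEq_pair_app a b _
    BetaEq _ (app (abs (var 0)) b) := .app_left (.of_subst0_eq rfl) b
    BetaEq _ b := .of_subst0_eq rfl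

/-- A list of terms as nested pairs; the term that ends it is arbitrary. -/
def ofList (l : List Lam) : Lam := l.foldr pair (abs (var 0))

/-- The function `λp (p)λaλb b`, which drops the first entry of a list. -/
def tail : Lam := abs (app (var 0) selectSnd)

theorem betaEq_tail_ofList_cons (a : Lam) (l : List Lam) :
    BetaEq (app tail (ofList (a :: l))) (ofList l) :=
  calc
    BetaEq _ (app (ofList (a :: l)) selectSnd) := .of_subst0_eq rfl
    BetaEq _ (ofList l) := betaEq_pair_selectSnd a (ofList l)

theorem betaEq_iterApp_tail_ofList {l : List Lam} {n : ℕ} (hn : n ≤ l.length) :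
    BetaEq (iterApp tail n (ofList l)) (ofList (l.drop n)) := by
  induction n with
  | zero => exact .refl _
  | succ n ih =>
    calc
      BetaEq _ (app tail (ofList (l.drop n))) := .app_right tail (ih (Nat.le_of_succ_le hn))
      BetaEq _ (ofList (l.drop (n + 1))) := by
        rw [List.drop_eq_getElem_cons hn]
        exact betaEq_tail_ofList_cons _ _

theorem betaEq_church_app_app (n : ℕ) (x f : Lam) :
    BetaEq (app (app (church n) x) f) (iterApp f n x) :=
  calc
    BetaEq _ (app (abs (iterApp (var 0) n (x.rename (· + 1)))) f) :=
      .app_left (.of_subst0_eq (by simp only [subst0, subst, subst_iterApp]; rfl)) f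
    BetaEq _ (iterApp f n x) := .of_subst0_eq <|
      (subst_iterApp _ _ n _).trans (congrArg (iterApp f n) (rename_succ_subst0 x f))

/-- Arguments for which `n̲` first drops `n` entries of the list `l` and then selects the next. -/
def listArgs (l : List Lam) : List Lam := [ofList l, tail, selectFst]

theorem betaEq_church_listArgs {l : List Lam} {n : ℕ} (hn : n < l.length) :
    BetaEq (appList (church n) (listArgs l)) l[n] :=
  calc
    BetaEq _ (app (iterApp tail n (ofList l)) selectFst) :=
      (betaEq_church_app_app n (ofList l) tail).app_left selectFst
    BetaEq _ (app (ofList (l.drop n)) selectFst) :=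
      (betaEq_iterApp_tail_ofList hn.le).app_left selectFst
    BetaEq _ l[n] := by
      rw [List.drop_eq_getElem_cons hn]
      exact betaEq_pair_selectFst _ _

end Lam

open Lam in
/-- Every finite subset of the set of Church integers has a strong storage operator. -/
theorem stmt5 (F : Finset ℕ) :
    ∃ T : Lam, Closed T ∧ ∀ n ∈ F, ∀ θ : Lam, BetaEq θ (church n) →
      HeadRed (app (app T θ) (var 0)) (app (var 0) (church n)) := by
  obtain ⟨m, hm⟩ := F.exists_nat_subset_range
  let vars : List Lam := (List.range m).map var
  refine ⟨storageOperator church (listArgs vars), closed_storageOperator closed_church _,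
    fun n hn θ hθ => ?_⟩
  have hlen : n < vars.length := by simpa [vars] using hm hn
  have hselect : BetaEq (appList (church n) (listArgs vars)) (var n) := by
    have hget : vars[n] = var n := by simp [vars]
    exact hget ▸ betaEq_church_listArgs hlen
  exact (weakHeadRed_storageOperator (closed_church n) hselect hθ (var 0)).headRed
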